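/- arXiv:0902.3345 — 2 statements merged into one kernel-verified Lean document; each statement's English description precedes it below -/
import Mathlib

section
/- A polynomial p ∈ ℝ[t_1,…,t_n] of degree d is an RZ_e-polynomial with respect to e ∈ ℝ^n if and only if its homogenization P(t,u) = u^d · p(t/u) ∈ ℝ[t_1,…,t_n,u] is hyperbolic with respect to (e,1) ∈ ℝ^{n+1}. -/
open MvPolynomial

/-- The univariate polynomial `s ↦ p(e + s·v)`. -/
noncomputable def lineEvalAdd {n : ℕ} (p : MvPolynomial (Fin n) ℝ) (e v : Fin n → ℝ) :
    Polynomial ℝ :=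
  MvPolynomial.aeval (fun i => Polynomial.C (e i) + Polynomial.C (v i) * Polynomial.X) p

/-- `p` is a real zero polynomial with respect to `e` (an RZ_e-polynomial): `p(e) > 0` and
for every `v ≠ 0` all complex zeros of `s ↦ p(e + s·v)` are real. -/
def IsRZ {n : ℕ} (p : MvPolynomial (Fin n) ℝ) (e : Fin n → ℝ) : Prop :=
  0 < eval e p ∧
    ∀ v : Fin n → ℝ, v ≠ 0 → ∀ z : ℂ,
      Polynomial.aeval z (lineEvalAdd p e v) = 0 → z.im = 0

/-- The univariate polynomial `s ↦ P(x - s·e)`. -/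
noncomputable def lineEvalSub {m : ℕ} (P : MvPolynomial (Fin m) ℝ) (x e : Fin m → ℝ) :
    Polynomial ℝ :=
  MvPolynomial.aeval (fun i => Polynomial.C (x i) - Polynomial.C (e i) * Polynomial.X) P

/-- `P` is hyperbolic with respect to `e`: `P(e) > 0` and for every `x ∈ ℝᵐ` all complex
zeros of the univariate polynomial `s ↦ P(x - s·e)` are real. -/
def IsHyperbolicWrt {m : ℕ} (P : MvPolynomial (Fin m) ℝ) (e : Fin m → ℝ) : Prop :=
  0 < eval e P ∧
    ∀ x : Fin m → ℝ, ∀ z : ℂ, Polynomial.aeval z (lineEvalSub P x e) = 0 → z.im = 0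

/-- The homogenization `P(t,u) = Σ_{i=0}^d p_{d-i}(t)·u^i` of a polynomial `p` of degree
`d` (here `p_j` is the homogeneous component of `p` of degree `j`, and `u` is the last
variable). -/
noncomputable def homog {n : ℕ} (p : MvPolynomial (Fin n) ℝ) (d : ℕ) :
    MvPolynomial (Fin (n + 1)) ℝ :=
  ∑ i ∈ Finset.range (d + 1),
    rename Fin.castSucc (homogeneousComponent i p) * X (Fin.last n) ^ (d - i)

lemma aeval_smul_homog {n : ℕ} {φ : MvPolynomial (Fin n) ℝ} {i : ℕ} (h : φ.IsHomogeneous i)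
    (g : Fin n → ℂ) (w : ℂ) :
    aeval (fun j => w * g j) φ = w ^ i * aeval g φ := by
  rw [aeval_def, aeval_def, eval₂_eq, eval₂_eq, Finset.mul_sum]
  refine Finset.sum_congr rfl fun m hm => ?_
  have h1 : ∑ j ∈ m.support, m j = i := by
    have := h (mem_support_iff.mp hm)
    rw [← this, Finsupp.weight_apply]
    simp [Finsupp.sum]
  simp only [mul_pow, Finset.prod_mul_distrib, Finset.prod_pow_eq_pow_sum, h1]
  ring

lemma aeval_homog {n : ℕ} (p : MvPolynomial (Fin n) ℝ) (d : ℕ) (hd : p.totalDegree = d)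
    (g : Fin n → ℂ) (w : ℂ) :
    aeval (Fin.snoc (fun j => w * g j) w : Fin (n + 1) → ℂ) (homog p d) = w ^ d * aeval g p := by
  conv_rhs => rw [← sum_homogeneousComponent p, hd]
  simp only [homog, map_sum, map_mul, map_pow, aeval_rename, aeval_X, Fin.snoc_last, Finset.mul_sum]
  refine Finset.sum_congr rfl fun i hi => ?_
  have hf : ((Fin.snoc (fun j => w * g j) w : Fin (n + 1) → ℂ) ∘ Fin.castSucc)
      = fun j => w * g j := by
    funext j
    simp
  rw [hf, aeval_smul_homog (homogeneousComponent_isHomogeneous i p)]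
  have : d = i + (d - i) := by have := Finset.mem_range.mp hi; omega
  conv_rhs => rw [this, pow_add]
  ring

lemma aeval_lineAdd {n : ℕ} (p : MvPolynomial (Fin n) ℝ) (e v : Fin n → ℝ) (z : ℂ) :
    Polynomial.aeval z (lineEvalAdd p e v) = aeval (fun i => (e i : ℂ) + v i * z) p := by
  unfold lineEvalAdd
  rw [← AlgHom.comp_apply, comp_aeval]
  simp

lemma aeval_lineSub {n : ℕ} (p : MvPolynomial (Fin n) ℝ) (e v : Fin n → ℝ) (z : ℂ) :
    Polynomial.aeval z (lineEvalSub p e v) = aeval (fun i => (e i : ℂ) - v i * z) p := by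
  unfold lineEvalSub
  rw [← AlgHom.comp_apply, comp_aeval]
  simp

lemma aeval_ofReal {n : ℕ} (p : MvPolynomial (Fin n) ℝ) (e : Fin n → ℝ) :
    aeval (fun i => (e i : ℂ)) p = ((eval e p : ℝ) : ℂ) :=
  aeval_algebraMap_apply ℂ e p

/-- The key identity. -/
lemma key {n : ℕ} (p : MvPolynomial (Fin n) ℝ) (d : ℕ) (hd : p.totalDegree = d)
    (e a : Fin n → ℝ) (b : ℝ) (z : ℂ) (hw : (b : ℂ) - z ≠ 0) :
    Polynomial.aeval z (lineEvalSub (homog p d) (Fin.snoc a b) (Fin.snoc e 1)) =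
      ((b : ℂ) - z) ^ d *
        Polynomial.aeval ((b : ℂ) - z)⁻¹ (lineEvalAdd p e (fun i => a i - b * e i)) := by
  rw [aeval_lineSub, aeval_lineAdd, ← aeval_homog p d hd]
  congr 2
  funext j
  refine Fin.lastCases ?_ (fun j => ?_) j
  · simp
  · simp
    field_simp
    ring

lemma eval_homog {n : ℕ} (p : MvPolynomial (Fin n) ℝ) (d : ℕ) (hd : p.totalDegree = d)
    (e : Fin n → ℝ) : eval (Fin.snoc e 1 : Fin (n + 1) → ℝ) (homog p d) = eval e p := by
  have h := aeval_homog p d hd (fun i => (e i : ℂ)) 1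
  rw [aeval_ofReal] at h
  have h2 := aeval_ofReal (homog p d) (Fin.snoc e 1)
  have : (fun i => (((Fin.snoc e 1 : Fin (n + 1) → ℝ) i : ℝ) : ℂ)) =
      (Fin.snoc (fun j => 1 * (e j : ℂ)) 1 : Fin (n + 1) → ℂ) := by
    funext j
    refine Fin.lastCases ?_ (fun j => ?_) j <;> simp
  rw [this, h] at h2
  simp only [one_pow, one_mul] at h2
  exact_mod_cast h2.symm

/-- A polynomial `p` of degree `d` is an RZ_e-polynomial iff its
homogenization `P(t,u) = u^d·p(t/u)` is hyperbolic with respect to `(e,1)`. -/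
theorem isRZ_iff_homogenization_hyperbolic {n : ℕ} (p : MvPolynomial (Fin n) ℝ)
    (d : ℕ) (hd : p.totalDegree = d) (e : Fin n → ℝ) :
    IsRZ p e ↔ IsHyperbolicWrt (homog p d) (Fin.snoc e 1) := by
  unfold IsRZ IsHyperbolicWrt
  rw [eval_homog p d hd]
  refine and_congr_right fun hpos => ⟨fun H x z hz => ?_, fun H v hv z hz => ?_⟩
  · by_contra hne
    rw [← Fin.snoc_init_self x] at hz
    set a := Fin.init x
    set b := x (Fin.last n)
    have hw : (b : ℂ) - z ≠ 0 := by
      intro h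
      apply hne
      rw [← sub_eq_zero.mp h]
      simp
    rw [key p d hd e a b z hw] at hz
    have hz := (mul_eq_zero.mp hz).resolve_left (pow_ne_zero _ hw)
    by_cases hv : (fun i => a i - b * e i) = 0
    · rw [hv, aeval_lineAdd] at hz
      simp only [Pi.zero_apply, Complex.ofReal_zero, zero_mul, add_zero] at hz
      rw [aeval_ofReal] at hz
      exact hpos.ne' (by exact_mod_cast hz)
    · have h := H _ hv _ hz
      rw [Complex.inv_im, div_eq_zero_iff] at h
      rcases h with h | h
      · simp at h
        exact hne h
      · exact hw (Complex.normSq_eq_zero.mp h)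
  · by_contra hne
    have hz0 : z ≠ 0 := by
      rintro rfl
      simp at hne
    have hk := key p d hd e v 0 (-z⁻¹) (by simpa using hz0)
    simp only [Complex.ofReal_zero, zero_sub, neg_neg, inv_inv, zero_mul, sub_zero] at hk
    rw [hz, mul_zero] at hk
    have h := H _ _ hk
    rw [Complex.neg_im, Complex.inv_im, neg_eq_zero, div_eq_zero_iff] at h
    rcases h with h | h
    · exact hne (by simpa using h)
    · exact hz0 (Complex.normSq_eq_zero.mp h)
end

section
/- Let S be a closed convex subset of ℝ^n, F a face of S, and x₀ a point in the relative interior of F. Then F consists exactly of x₀ together with those points x ∈ S \ {x₀} such that x₀ lies in the relative interior of g(x,x₀) ∩ S, where g(x,x₀) denotes the affine line through x and x₀. -/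
open MvPolynomial

/-- A face of a convex set `S ⊆ ℝⁿ`: a nonempty convex subset `F ⊆ S` such that whenever
`x, y ∈ S`, `λ ∈ (0,1)` and `λx + (1-λ)y ∈ F`, then `x, y ∈ F`. -/
def IsFaceOf {n : ℕ} (S F : Set (Fin n → ℝ)) : Prop :=
  F.Nonempty ∧ Convex ℝ F ∧ F ⊆ S ∧
    ∀ x ∈ S, ∀ y ∈ S, ∀ l : ℝ, 0 < l → l < 1 →
      l • x + (1 - l) • y ∈ F → x ∈ F ∧ y ∈ F

/-- The affine-linear function `x ↦ c + a·x` on `ℝⁿ`. -/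
def affEval {n : ℕ} (a : Fin n → ℝ) (c : ℝ) (x : Fin n → ℝ) : ℝ :=
  c + ∑ i, a i * x i

/-- `F` is an exposed face of `S`: either `F = S` or there is a nonzero affine-linear
function `ℓ` with `ℓ ≥ 0` on `S`, `{ℓ = 0} ∩ S ≠ ∅` and `{ℓ = 0} ∩ S = F`. -/
def IsExposedFaceOf {n : ℕ} (S F : Set (Fin n → ℝ)) : Prop :=
  F = S ∨ ∃ (a : Fin n → ℝ) (c : ℝ), affEval a c ≠ 0 ∧
    (∀ x ∈ S, 0 ≤ affEval a c x) ∧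
    ({x | affEval a c x = 0} ∩ S).Nonempty ∧
    {x | affEval a c x = 0} ∩ S = F

theorem relint_extend {n : ℕ} {T : Set (Fin n → ℝ)} {z y : Fin n → ℝ}
    (hz : z ∈ intrinsicInterior ℝ T) (hy : y ∈ T) :
    ∃ e : ℝ, 0 < e ∧ z + e • (z - y) ∈ T := by
  rw [mem_intrinsicInterior] at hz
  obtain ⟨w, hw, rfl⟩ := hz
  rw [mem_interior_iff_mem_nhds, Metric.mem_nhds_iff] at hw
  obtain ⟨r, hr, hsub⟩ := hw
  have hy' := subset_affineSpan ℝ T hy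
  have hN : 0 < ‖(w : Fin n → ℝ) - y‖ + 1 := by positivity
  refine ⟨r / (‖(w : Fin n → ℝ) - y‖ + 1), by positivity, ?_⟩
  set e := r / (‖(w : Fin n → ℝ) - y‖ + 1) with he
  have he0 : 0 < e := by positivity
  have hmem : (w : Fin n → ℝ) + e • ((w : Fin n → ℝ) - y) ∈ affineSpan ℝ T := by
    have := AffineSubspace.smul_vsub_vadd_mem (affineSpan ℝ T) e w.2 hy' w.2
    simpa [add_comm] using this
  have := @hsub ⟨_, hmem⟩ (by
    rw [Metric.mem_ball, Subtype.dist_eq, dist_eq_norm, add_sub_cancel_left, norm_smul,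
      Real.norm_of_nonneg he0.le]
    have h2 : e * (‖(w : Fin n → ℝ) - y‖ + 1) = r := by rw [he]; field_simp
    linarith)
  exact this

/-- Let `S ⊆ ℝⁿ` be closed convex, `F` a face of `S` and `x₀` a point in
the relative interior of `F`.  Then `F` consists exactly of `x₀` together with those
`x ∈ S \ {x₀}` such that `x₀` lies in the relative interior of `g(x,x₀) ∩ S`, where
`g(x,x₀)` is the affine line through `x` and `x₀`. -/
theorem face_eq_relativeInterior_description {n : ℕ} (S : Set (Fin n → ℝ))
    (hclosed : IsClosed S) (hconv : Convex ℝ S)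
    (F : Set (Fin n → ℝ)) (hF : IsFaceOf S F)
    (x0 : Fin n → ℝ) (hx0 : x0 ∈ intrinsicInterior ℝ F) :
    F = insert x0 {x | x ∈ S ∧ x ≠ x0 ∧
      x0 ∈ intrinsicInterior ℝ ({y | ∃ t : ℝ, y = x + t • (x0 - x)} ∩ S)} := by
  obtain ⟨-, hFc, hFS, hface⟩ := hF
  have hx0F := intrinsicInterior_subset hx0
  ext x
  simp only [Set.mem_insert_iff, Set.mem_ofPred_eq]
  constructor
  · intro hx
    by_cases hne : x = x0
    · exact Or.inl hne
    refine Or.inr ⟨hFS hx, hne, ?_⟩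
    obtain ⟨e, he, heF⟩ := relint_extend hx0 hx
    have hpos : 0 < ‖x0 - x‖ := norm_pos_iff.2 (sub_ne_zero.2 (Ne.symm hne))
    have hin : x0 ∈ {y | ∃ t : ℝ, y = x + t • (x0 - x)} ∩ S :=
      ⟨⟨1, by simp⟩, hFS hx0F⟩
    rw [mem_intrinsicInterior]
    refine ⟨⟨x0, subset_affineSpan ℝ _ hin⟩, ?_, rfl⟩
    rw [mem_interior_iff_mem_nhds, Metric.mem_nhds_iff]
    refine ⟨min 1 e * ‖x0 - x‖, by positivity, ?_⟩
    rintro ⟨y, hy⟩ hyb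
    have hle : affineSpan ℝ ({y | ∃ t : ℝ, y = x + t • (x0 - x)} ∩ S) ≤ line[ℝ, x, x0] := by
      rw [affineSpan_le]
      rintro _ ⟨⟨t, rfl⟩, -⟩
      refine mem_affineSpan_pair_iff_exists_lineMap_eq.2 ⟨t, ?_⟩
      simp [AffineMap.lineMap_apply, add_comm]
    obtain ⟨t, rfl⟩ := mem_affineSpan_pair_iff_exists_lineMap_eq.1 (hle hy)
    have hyt : AffineMap.lineMap x x0 t = x + t • (x0 - x) := by
      simp [AffineMap.lineMap_apply, add_comm]
    rw [Metric.mem_ball, Subtype.dist_eq, dist_eq_norm] at hyb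
    simp only [hyt] at hyb
    have e1 : x + t • (x0 - x) - x0 = (t - 1) • (x0 - x) := by module
    rw [e1, norm_smul, Real.norm_eq_abs] at hyb
    have ht := lt_of_mul_lt_mul_right hyb hpos.le
    rw [abs_lt] at ht
    have h1 := min_le_left 1 e
    have h2 := min_le_right 1 e
    have h1e : 0 < 1 + e := by linarith
    change AffineMap.lineMap x x0 t ∈ {y | ∃ t : ℝ, y = x + t • (x0 - x)} ∩ S
    rw [hyt]
    refine ⟨⟨t, rfl⟩, ?_⟩
    have := hconv (hFS hx) (hFS heF) (a := 1 - t / (1 + e)) (b := t / (1 + e))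
      (by rw [sub_nonneg, div_le_one h1e]; linarith) (div_nonneg (by linarith) h1e.le) (by ring)
    convert this using 1
    ext i
    simp
    field_simp
    ring
  · rintro (rfl | ⟨hxS, hne, hx⟩)
    · exact hx0F
    obtain ⟨e, he, -, heS⟩ := relint_extend hx (y := x) ⟨⟨0, by simp⟩, hxS⟩
    have h1e : 0 < 1 + e := by linarith
    refine (hface x hxS _ heS (e / (1 + e)) (by positivity)
      (by rw [div_lt_one h1e]; linarith) ?_).1
    convert hx0F using 1
    ext i
    simp
    field_simp
    ring
end
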